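/- arXiv:1510.00092 — 9 statements merged into one kernel-verified Lean document; each statement's English description precedes it below -/
import Mathlib

section
/- The S₆-invariant quartic threefold X = X₆ ⊂ ℙ⁵ is rational. Concretely: let F ∈ ℂ[y₁,y₂,y₃,y₄] be the polynomial obtained from f by the substitution x₀ := 1, x₁ := y₁, x₂ := y₂, x₃ := y₃, x₄ := y₄, x₅ := −(1 + y₁ + y₂ + y₃ + y₄) (an affine chart of the hyperplane ℓ = 0). Then the ideal (F) is prime in ℂ[y₁,…,y₄], and the fraction field of the integral domain ℂ[y₁,…,y₄]/(F) is isomorphic as a ℂ-algebra to the field of rational functions in three variables, FractionRing (MvPolynomial (Fin 3) ℂ). -/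
open MvPolynomial

/-- The quartic f = 6·∑xᵢ⁴ − (∑xᵢ²)² defining the S₆-invariant quartic X = X₆. -/
noncomputable def f6 : MvPolynomial (Fin 6) ℂ :=
  6 * (∑ i : Fin 6, X i ^ 4) - (∑ i : Fin 6, X i ^ 2) ^ 2

/-- The polynomial F obtained from f by the substitution
x₀ := 1, x₁ := y₁, x₂ := y₂, x₃ := y₃, x₄ := y₄, x₅ := −(1+y₁+y₂+y₃+y₄),
cutting out an affine chart of X inside the hyperplane ∑xᵢ = 0. -/
noncomputable def Faff : MvPolynomial (Fin 4) ℂ :=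
  MvPolynomial.aeval ![1, X 0, X 1, X 2, X 3, -(1 + X 0 + X 1 + X 2 + X 3)] f6

namespace X6

section Formulas
variable {R S : Type*} [CommRing R] [CommRing S]

/-- Coefficients of the two linear equations for the residual point of the plane through the
line on the quartic del Pezzo fibre. -/
def ph (w l t u : R) : R := 2*t*(l*(l+w-1))+4*l*u+2*(l*(l-w^2))-4*w-4*l
def pM (w _l t u : R) : R := 2*w^2*t+2*w*u+2*w^2
def ps (w _l t u : R) : R := t^2+w*u^2-1
def rh (w l t u : R) : R :=
  2*(l+2)*t*(l*(l+w-1))+4*w^2*l*(w^2*l+2)*u+2*(l-2)*(l*(l-w^2))-4*l*w^2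
def rM (w l t u : R) : R := 2*(l+2)*w^2*t+2*(w^2*l+2)*u+2*(l-2)*w^2-4
def rs (w l t u : R) : R := (l+2)*t^2+(w^2*l+2)*u^2-l+2

def hh (w l t u : R) : R := pM w l t u * rs w l t u - ps w l t u * rM w l t u
def MM (w l t u : R) : R := ps w l t u * rh w l t u - ph w l t u * rs w l t u
def ss (w l t u : R) : R := ph w l t u * rM w l t u - pM w l t u * rh w l t u
def LL (w l t u : R) : R := ss w l t u - w^2 * MM w l t u - l*(l-w^2) * hh w l t u
def dd (w l t u : R) : R := t * ss w l t u + w^2 * MM w l t u + l*(l+w-1) * hh w l t u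
def ee (w l t u : R) : R := u * ss w l t u + MM w l t u + 2*w^2*l * hh w l t u
def h2 (w l t u : R) : R := hh w l t u - LL w l t u - MM w l t u
def X0 (w l t u : R) : R := 2 * hh w l t u + 2 * LL w l t u

lemma map_hh (g : R →+* S) (w l t u : R) :
    g (hh w l t u) = hh (g w) (g l) (g t) (g u) := by
  simp [hh, pM, ps, rM, rs, map_ofNat]
lemma map_MM (g : R →+* S) (w l t u : R) :
    g (MM w l t u) = MM (g w) (g l) (g t) (g u) := by
  simp [MM, ph, ps, rh, rs, map_ofNat]
lemma map_ss (g : R →+* S) (w l t u : R) :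
    g (ss w l t u) = ss (g w) (g l) (g t) (g u) := by
  simp [ss, ph, pM, rh, rM, map_ofNat]
lemma map_LL (g : R →+* S) (w l t u : R) :
    g (LL w l t u) = LL (g w) (g l) (g t) (g u) := by
  simp [LL, map_hh, map_MM, map_ss]
lemma map_h2 (g : R →+* S) (w l t u : R) :
    g (h2 w l t u) = h2 (g w) (g l) (g t) (g u) := by
  simp [h2, map_hh, map_MM, map_LL]
lemma map_X0 (g : R →+* S) (w l t u : R) :
    g (X0 w l t u) = X0 (g w) (g l) (g t) (g u) := by
  simp [X0, map_hh, map_LL, map_ofNat]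

lemma E2_aux (w l t u h M s : R) (hw : w^2+w+1 = 0)
    (H : ph w l t u * h + pM w l t u * M + ps w l t u * s = 0)
    (L d e : R) (hL : L = s - w^2*M - l*(l-w^2)*h) (hd : d = t*s + w^2*M + l*(l+w-1)*h)
    (he : e = u*s + M + 2*w^2*l*h) :
    d^2+w*e^2 - (L^2+w*M^2-4*l*h^2+(4*w+4*l)*h*L+(4+4*l)*h*M) = 0 := by
  subst hL hd he
  unfold ph pM ps at H
  linear_combination s * H + (4 * w^3 * l^2 * h^2 + (-5) * w^2 * l^2 * h^2 + 2 * w^2 * l * h * M + 1 * w * l^2 * h^2 + 4 * w * l * u * h * s + (-4) * w * l * h^2 + 4 * w * l * h * M + 4 * w * h * M + 2 * l^3 * h^2 + 1 * l^2 * h^2 + (-4) * l * u * h * s + 4 * l * h^2 + (-4) * l * h * M + (-4) * h * M) * hw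

lemma E1_aux (w l t u h M s : R) (hw : w^2+w+1 = 0)
    (H : rh w l t u * h + rM w l t u * M + rs w l t u * s = 0)
    (L d e : R) (hL : L = s - w^2*M - l*(l-w^2)*h) (hd : d = t*s + w^2*M + l*(l+w-1)*h)
    (he : e = u*s + M + 2*w^2*l*h) :
    (l+2)*d^2+(w^2*l+2)*e^2 - ((l-2)*L^2+(w^2*l-2)*M^2+4*L*M+4*l*w^2*h*L+4*l*h*M) = 0 := by
  subst hL hd he
  unfold rh rM rs at H
  linear_combination s * H + (4 * w^4 * l^3 * h^2 + (-4) * w^3 * l^3 * h^2 + (-1) * w^2 * l^3 * h^2 + 6 * w^2 * l^2 * h^2 + 6 * w^2 * l^2 * h * M + 4 * w^2 * M^2 + 5 * w * l^3 * h^2 + (-6) * w * l^2 * h^2 + (-4) * w * l^2 * h * M + 4 * w * l * h * M + (-4) * w * M^2 + 2 * l^4 * h^2 + (-3) * l^3 * h^2 + 2 * l^2 * h^2 + 4 * l^2 * h * M + (-4) * l * h * M + 4 * M^2) * hw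

/-- The quartic in the adapted coordinates vanishes as soon as the two quadrics do. -/
lemma quartic_aux (w l h M L d e : R) (hw : w^2+w+1 = 0)
    (E2 : d^2+w*e^2 - (L^2+w*M^2-4*l*h^2+(4*w+4*l)*h*L+(4+4*l)*h*M) = 0)
    (E1 : (l+2)*d^2+(w^2*l+2)*e^2 -
      ((l-2)*L^2+(w^2*l-2)*M^2+4*L*M+4*l*w^2*h*L+4*l*h*M) = 0) :
    6*((2*h+2*L)^4+(2*h-L+(w^2-w)*d)^4+(2*h-L-(w^2-w)*d)^4+(-2*h-2*M)^4
      +(-2*h+M-(w^2-w)*e)^4+(-2*h+M+(w^2-w)*e)^4)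
    - ((2*h+2*L)^2+(2*h-L+(w^2-w)*d)^2+(2*h-L-(w^2-w)*d)^2+(-2*h-2*M)^2
      +(-2*h+M-(w^2-w)*e)^2+(-2*h+M+(w^2-w)*e)^2)^2 = 0 := by
  have F16 : (L^2-d^2+w*(M^2-e^2)+4*h*(w*L+M))*(L^2-d^2+w^2*(M^2-e^2)+4*h*(w^2*L+M))
      + 4*h*(h-L-M)*(-2*((L-M)^2+d^2+e^2)) = 0 := by
    linear_combination (-(L^2-d^2+w^2*(M^2-e^2)+4*h*(w^2*L+M))) * E2 + (-4*h*(h-L-M)) * E1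
  linear_combination 72 * F16 + (8 * w^6 * d^4 + (-8) * w^6 * d^2 * e^2 + 8 * w^6 * e^4 + (-40) * w^5 * d^4 + 40 * w^5 * d^2 * e^2 + (-40) * w^5 * e^4 + 80 * w^4 * d^4 + (-80) * w^4 * d^2 * e^2 + 80 * w^4 * e^4 + (-72) * w^3 * d^4 + 72 * w^3 * d^2 * e^2 + (-72) * w^3 * e^4 + 192 * w^2 * h^2 * d^2 + 192 * w^2 * h^2 * e^2 + (-288) * w^2 * h * M * e^2 + (-288) * w^2 * h * L * d^2 + (-24) * w^2 * M^2 * d^2 + 48 * w^2 * M^2 * e^2 + 48 * w^2 * L^2 * d^2 + (-24) * w^2 * L^2 * e^2 + (-1152) * w * h^2 * L^2 + (-576) * w * h^2 * d^2 + (-576) * w * h^2 * e^2 + (-576) * w * h * M^2 * L + 864 * w * h * M * e^2 + 864 * w * h * L * d^2 + 576 * w * h * L * e^2 + (-72) * w * M^4 + 72 * w * M^2 * d^2 + (-144) * w * L^2 * d^2 + 72 * w * L^2 * e^2 + 72 * w * d^4 + (-72) * w * d^2 * e^2 + (-1152) * h^2 * M * L + 1152 * h^2 * L^2 + 576 * h^2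 * d^2 + 576 * h^2 * e^2 + (-288) * h * M^3 + 576 * h * M^2 * L + (-576) * h * M * e^2 + (-288) * h * L^3 + (-576) * h * L * d^2 + (-576) * h * L * e^2 + 72 * M^4 + (-72) * M^2 * L^2 + 144 * L^2 * d^2 + (-72) * d^4) * hw

lemma E2_holds (w l t u : R) (hw : w^2+w+1 = 0) :
    (dd w l t u)^2+w*(ee w l t u)^2 - ((LL w l t u)^2+w*(MM w l t u)^2-4*l*(hh w l t u)^2
      +(4*w+4*l)*(hh w l t u)*(LL w l t u)+(4+4*l)*(hh w l t u)*(MM w l t u)) = 0 :=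
  E2_aux w l t u _ _ (ss w l t u) hw (by unfold hh MM ss; ring) _ _ _ rfl rfl rfl

lemma E1_holds (w l t u : R) (hw : w^2+w+1 = 0) :
    (l+2)*(dd w l t u)^2+(w^2*l+2)*(ee w l t u)^2 -
      ((l-2)*(LL w l t u)^2+(w^2*l-2)*(MM w l t u)^2+4*(LL w l t u)*(MM w l t u)
      +4*l*w^2*(hh w l t u)*(LL w l t u)+4*l*(hh w l t u)*(MM w l t u)) = 0 :=
  E1_aux w l t u _ _ (ss w l t u) hw (by unfold hh MM ss; ring) _ _ _ rfl rfl rfl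

end Formulas

lemma values (w : ℂ) (hw : w^2+w+1 = 0) :
    hh w 1 0 0 ≠ 0 ∧ ss w 1 0 0 ≠ 0 ∧ X0 w 1 0 0 ≠ 0 ∧ h2 w 1 0 0 ≠ 0 := by
  have e1 : hh w 1 0 0 = -4 := by unfold hh pM ps rM rs; ring
  have e2 : MM w 1 0 0 = 0 := by
    unfold MM ph ps rh rs; linear_combination 4 * hw
  have e3 : ss w 1 0 0 = 8*w := by
    have h3 : w^3 = 1 := by linear_combination (w-1)*hw
    have h4 : w^4 = w := by linear_combination w * h3
    unfold ss ph pM rh rM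
    ring_nf
    simp only [h3, h4]
    linear_combination (16 : ℂ) * hw
  have e4 : LL w 1 0 0 = 8 + 12*w := by
    unfold LL; rw [e1, e2, e3]; linear_combination (-4)*hw
  have key : ∀ a b : ℂ, a^2 - a*b + b^2 ≠ 0 → a + b*w ≠ 0 := by
    intro a b h h0
    apply h
    linear_combination (a - b - b*w) * h0 + b^2 * hw
  refine ⟨by rw [e1]; norm_num, ?_, ?_, ?_⟩
  · rw [e3]; have := key 0 8 (by norm_num); simpa using this
  · unfold X0; rw [e1, e4]
    have := key 8 24 (by norm_num)
    intro h; apply this; linear_combination h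
  · unfold h2; rw [e1, e2, e4]
    have := key (-12) (-12) (by norm_num)
    intro h; apply this; linear_combination h

end X6

namespace X6

/-- Explicit form of the chart polynomial, evaluated in any commutative `ℂ`-algebra. -/
lemma aeval_Faff {A : Type*} [CommRing A] [Algebra ℂ A] (y : Fin 4 → A) :
    aeval y Faff = 6 * (1 + y 0 ^ 4 + y 1 ^ 4 + y 2 ^ 4 + y 3 ^ 4 +
      (-(1 + y 0 + y 1 + y 2 + y 3)) ^ 4) -
      (1 + y 0 ^ 2 + y 1 ^ 2 + y 2 ^ 2 + y 3 ^ 2 + (-(1 + y 0 + y 1 + y 2 + y 3)) ^ 2) ^ 2 := by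
  unfold Faff f6
  simp [Fin.sum_univ_succ, map_ofNat, Fin.succ]
  ring

/-- the monic quartic in one variable -/
noncomputable def G {R : Type*} [CommRing R] [Algebra ℂ R] (a b c : R) : Polynomial R :=
  Polynomial.X ^ 4 + (Polynomial.C (2 * (1+a+b+c)) * Polynomial.X ^ 3 +
   Polynomial.C (algebraMap ℂ R (1/8) * (28 * (1+a+b+c)^2 - 4 * (1+a^2+b^2+c^2)))
      * Polynomial.X ^ 2 +
   Polynomial.C (algebraMap ℂ R (1/8) *
      (20 * (1+a+b+c)^3 - 4 * (1+a+b+c) * (1+a^2+b^2+c^2))) * Polynomial.X +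
   Polynomial.C (algebraMap ℂ R (1/8) *
      (6 * (1+a+b+c)^4 + 6 * (1+a^4+b^4+c^4) - ((1+a+b+c)^2+(1+a^2+b^2+c^2))^2)))

section
variable {R S : Type*} [CommRing R] [Algebra ℂ R] [CommRing S] [Algebra ℂ S]

lemma G_natDegree [Nontrivial R] (a b c : R) : (G a b c).natDegree = 4 := by
  unfold G; compute_degree!

lemma G_monic (a b c : R) : (G a b c).Monic := by
  unfold G; monicity!

lemma G_map (g : R →ₐ[ℂ] S) (a b c : R) :
    (G a b c).map (g : R →+* S) = G (g a) (g b) (g c) := by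
  simp [G, map_ofNat]

lemma G_eval (a b c x : R) : 8 * (G a b c).eval x =
    6 * (1 + x ^ 4 + a ^ 4 + b ^ 4 + c ^ 4 + (-(1 + x + a + b + c)) ^ 4) -
      (1 + x ^ 2 + a ^ 2 + b ^ 2 + c ^ 2 + (-(1 + x + a + b + c)) ^ 2) ^ 2 := by
  have h8 : (8 : R) * algebraMap ℂ R (1/8) = 1 := by
    rw [show (8 : R) = algebraMap ℂ R 8 by simp [map_ofNat], ← map_mul]; norm_num
  simp only [G, Polynomial.eval_add, Polynomial.eval_mul, Polynomial.eval_pow, Polynomial.eval_X,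
    Polynomial.eval_C]
  linear_combination ((28 * (1+a+b+c)^2 - 4 * (1+a^2+b^2+c^2)) * x^2 +
    (20 * (1+a+b+c)^3 - 4 * (1+a+b+c) * (1+a^2+b^2+c^2)) * x +
    (6 * (1+a+b+c)^4 + 6 * (1+a^4+b^4+c^4) - ((1+a+b+c)^2+(1+a^2+b^2+c^2))^2)) * h8
end

lemma finSucc_Faff : finSuccEquiv ℂ 3 Faff =
    8 * G (X 0 : MvPolynomial (Fin 3) ℂ) (X 1) (X 2) := by
  have h1 : finSuccEquiv ℂ 3 Faff =
      aeval (fun i => finSuccEquiv ℂ 3 (X i : MvPolynomial (Fin 4) ℂ)) Faff := by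
    have := MvPolynomial.comp_aeval_apply (X : Fin 4 → MvPolynomial (Fin 4) ℂ)
      (finSuccEquiv ℂ 3).toAlgHom Faff
    simpa using this
  have e1 : finSuccEquiv ℂ 3 (X 1) = Polynomial.C (X 0) := finSuccEquiv_X_succ (j := 0)
  have e2 : finSuccEquiv ℂ 3 (X 2) = Polynomial.C (X 1) := finSuccEquiv_X_succ (j := 1)
  have e3 : finSuccEquiv ℂ 3 (X 3) = Polynomial.C (X 2) := finSuccEquiv_X_succ (j := 2)
  rw [h1, aeval_Faff]
  simp only [finSuccEquiv_X_zero, e1, e2, e3]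
  rw [← G_eval]
  congr 1
  have hm := G_map (IsScalarTower.toAlgHom ℂ (MvPolynomial (Fin 3) ℂ)
    (Polynomial (MvPolynomial (Fin 3) ℂ))) (X 0) (X 1) (X 2)
  simp only [IsScalarTower.coe_toAlgHom', Polynomial.algebraMap_apply, Algebra.algebraMap_self,
    RingHom.id_apply] at hm
  rw [← hm, Polynomial.eval_map]
  have : (IsScalarTower.toAlgHom ℂ (MvPolynomial (Fin 3) ℂ)
    (Polynomial (MvPolynomial (Fin 3) ℂ)) : MvPolynomial (Fin 3) ℂ →+* _) = Polynomial.C := by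
    ext <;> simp
  rw [this, Polynomial.eval₂_C_X]

lemma quartic_coeff {R : Type*} [CommRing R] (a3 a2 a1 a0 : R) :
    (Polynomial.X ^ 4 + (Polynomial.C a3 * Polynomial.X ^ 3 + Polynomial.C a2 * Polynomial.X ^ 2
      + Polynomial.C a1 * Polynomial.X + Polynomial.C a0)).coeff 0 = a0 ∧
    (Polynomial.X ^ 4 + (Polynomial.C a3 * Polynomial.X ^ 3 + Polynomial.C a2 * Polynomial.X ^ 2
      + Polynomial.C a1 * Polynomial.X + Polynomial.C a0)).coeff 1 = a1 ∧
    (Polynomial.X ^ 4 + (Polynomial.C a3 * Polynomial.X ^ 3 + Polynomial.C a2 * Polynomial.X ^ 2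
      + Polynomial.C a1 * Polynomial.X + Polynomial.C a0)).coeff 2 = a2 ∧
    (Polynomial.X ^ 4 + (Polynomial.C a3 * Polynomial.X ^ 3 + Polynomial.C a2 * Polynomial.X ^ 2
      + Polynomial.C a1 * Polynomial.X + Polynomial.C a0)).coeff 3 = a3 := by
  refine ⟨?_, ?_, ?_, ?_⟩ <;>
    simp [Polynomial.coeff_X, Polynomial.coeff_X_pow, Polynomial.coeff_C]

lemma G_special (w : ℂ) (hw : w^2+w+1 = 0) :
    Irreducible (G (Polynomial.C w + Polynomial.X : Polynomial ℂ) (Polynomial.C (w^2)) 0) := by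
  set z : Polynomial ℂ := Polynomial.X with hz
  have hW : (Polynomial.C w)^2 + Polynomial.C w + 1 = 0 := by
    rw [← Polynomial.C_pow, ← Polynomial.C_add, ← Polynomial.C_1, ← Polynomial.C_add, hw,
      Polynomial.C_0]
  rw [Polynomial.C_pow]
  set W : Polynomial ℂ := Polynomial.C w with hWdef
  have hs : 1 + (W + z) + W^2 + 0 = z := by linear_combination hW
  have hp2 : 1 + (W + z)^2 + (W^2)^2 + 0^2 = z * (2*W + z) := by
    linear_combination (W^2 - W + 1) * hW
  have hp4 : 1 + (W + z)^4 + (W^2)^4 + 0^4 = z * (4 + z*(6*W^2+4*W*z+z^2)) := by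
    linear_combination (W^6 - W^5 + W^3 - W + 1 + 4*z*(W-1)) * hW
  have hP : (Ideal.span {z} : Ideal (Polynomial ℂ)).IsPrime := by
    rw [Ideal.span_singleton_prime Polynomial.X_ne_zero]; exact Polynomial.prime_X
  have hdvd : ∀ n, n < 4 → z ∣ (G (W + z) (W^2) 0).coeff n := by
    intro n hn
    unfold G
    rw [hs, hp2, hp4]
    obtain ⟨c0, c1, c2, c3⟩ := quartic_coeff (R := Polynomial ℂ) (2 * z)
      (algebraMap ℂ (Polynomial ℂ) (1/8) * (28 * z^2 - 4 * (z * (2*W + z))))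
      (algebraMap ℂ (Polynomial ℂ) (1/8) * (20 * z^3 - 4 * z * (z * (2*W + z))))
      (algebraMap ℂ (Polynomial ℂ) (1/8) *
        (6 * z^4 + 6 * (z * (4 + z*(6*W^2+4*W*z+z^2))) - (z^2 + z * (2*W + z))^2))
    interval_cases n
    · rw [c0]
      exact ⟨algebraMap ℂ (Polynomial ℂ) (1/8) *
        (6 * z^3 + 6 * (4 + z*(6*W^2+4*W*z+z^2)) - z * (z + (2*W + z))^2), by ring⟩
    · rw [c1]
      exact ⟨algebraMap ℂ (Polynomial ℂ) (1/8) * (20 * z^2 - 4 * (z * (2*W + z))), by ring⟩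
    · rw [c2]
      exact ⟨algebraMap ℂ (Polynomial ℂ) (1/8) * (28 * z - 4 * (2*W + z)), by ring⟩
    · rw [c3]
      exact ⟨2, by ring⟩
  refine Polynomial.irreducible_of_eisenstein_criterion hP ?_ ?_ ?_ ?_ (G_monic _ _ _).isPrimitive
  · rw [(G_monic _ _ _).leadingCoeff]
    exact fun h => hP.ne_top ((Ideal.eq_top_iff_one _).2 h)
  · intro n hn
    rw [Ideal.mem_span_singleton]
    apply hdvd
    rw [Polynomial.degree_eq_natDegree (G_monic _ _ _).ne_zero, G_natDegree] at hn
    exact_mod_cast hn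
  · rw [Polynomial.degree_eq_natDegree (G_monic _ _ _).ne_zero, G_natDegree]
    norm_num
  · rw [Ideal.span_singleton_pow, Ideal.mem_span_singleton]
    unfold G
    rw [hs, hp2, hp4]
    rw [(quartic_coeff _ _ _ _).1]
    have h8 : (8 : Polynomial ℂ) * algebraMap ℂ (Polynomial ℂ) (1/8) = 1 := by
      rw [show (8 : Polynomial ℂ) = algebraMap ℂ (Polynomial ℂ) 8 by simp [map_ofNat], ← map_mul]
      norm_num
    rintro ⟨k, hk⟩
    have h24 : z^2 ∣ 24 * z := ⟨8 * k - (6 * z^2 + 6 * (6*W^2+4*W*z+z^2) - (z + (2*W + z))^2), by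
      linear_combination 8 * hk - (6 * z^4 + 6 * (z * (4 + z*(6*W^2+4*W*z+z^2)))
        - (z^2 + z * (2*W + z))^2) * h8⟩
    have := (Polynomial.X_pow_dvd_iff.1 h24) 1 (by norm_num)
    rw [show (24 : Polynomial ℂ) = Polynomial.C 24 from rfl, Polynomial.coeff_C_mul,
      Polynomial.coeff_X_one] at this
    norm_num at this

lemma Faff_irreducible : Irreducible Faff := by
  obtain ⟨w, hw⟩ : ∃ w : ℂ, w^2+w+1 = 0 := by
    obtain ⟨θ, hθ⟩ := IsAlgClosed.exists_pow_nat_eq (-3 : ℂ) (n := 2) (by norm_num)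
    exact ⟨(-1-θ)/2, by linear_combination hθ/4⟩
  have h1 : Irreducible (G (X 0 : MvPolynomial (Fin 3) ℂ) (X 1) (X 2)) := by
    refine Polynomial.Monic.irreducible_of_irreducible_map
      ((aeval ![Polynomial.C w + Polynomial.X, Polynomial.C (w^2), 0] :
        MvPolynomial (Fin 3) ℂ →ₐ[ℂ] Polynomial ℂ) : MvPolynomial (Fin 3) ℂ →+* Polynomial ℂ) _
        (G_monic _ _ _) ?_
    rw [G_map]
    simpa using G_special w hw
  rw [← MulEquiv.irreducible_iff (finSuccEquiv ℂ 3), finSucc_Faff]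
  have h8 : IsUnit (8 : Polynomial (MvPolynomial (Fin 3) ℂ)) := by
    have := (IsUnit.mk0 (8 : ℂ) (by norm_num)).map
      (algebraMap ℂ (Polynomial (MvPolynomial (Fin 3) ℂ)))
    simpa [map_ofNat] using this
  exact (irreducible_isUnit_mul h8).2 h1

lemma Faff_prime : (Ideal.span {Faff}).IsPrime :=
  (Ideal.span_singleton_prime Faff_irreducible.ne_zero).2 Faff_irreducible.prime

end X6

namespace X6

section Field
variable {K : Type*} [Field K] [Algebra ℂ K]

/-- The affine coordinates of the parametrised point. -/
noncomputable def Y (w l t u : K) : Fin 4 → K :=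
  ![(2*hh w l t u - LL w l t u + (w^2-w)*dd w l t u) / X0 w l t u,
    (2*hh w l t u - LL w l t u - (w^2-w)*dd w l t u) / X0 w l t u,
    (-2*hh w l t u - 2*MM w l t u) / X0 w l t u,
    (-2*hh w l t u + MM w l t u - (w^2-w)*ee w l t u) / X0 w l t u]

lemma aeval_Y (w l t u : K) (hw : w^2+w+1 = 0) (h0 : X0 w l t u ≠ 0) :
    aeval (Y w l t u) Faff = 0 := by
  have H := quartic_aux w l _ _ _ _ _ hw (E2_holds w l t u hw) (E1_holds w l t u hw)
  have hx : X0 w l t u = 2 * hh w l t u + 2 * LL w l t u := rfl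
  rw [aeval_Faff]
  simp only [Y, Matrix.cons_val]
  generalize X0 w l t u = x at *
  generalize hh w l t u = h at *
  generalize LL w l t u = L at *
  generalize MM w l t u = M at *
  generalize dd w l t u = d at *
  generalize ee w l t u = e at *
  have h5 : -(1 + (2*h-L+(w^2-w)*d)/x + (2*h-L-(w^2-w)*d)/x + (-2*h-2*M)/x
      + (-2*h+M-(w^2-w)*e)/x) = (-2*h+M+(w^2-w)*e)/x := by
    field_simp
    rw [hx]; ring
  rw [h5]
  rw [← hx] at H
  generalize 2*h-L+(w^2-w)*d = a1 at *
  generalize 2*h-L-(w^2-w)*d = a2 at *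
  generalize -2*h-2*M = a3 at *
  generalize -2*h+M-(w^2-w)*e = a4 at *
  generalize -2*h+M+(w^2-w)*e = a5 at *
  field_simp
  linear_combination H

lemma gen_aux (S : IntermediateField ℂ K) (w₀ : ℂ) (w l t u : K) (hw₀ : w = algebraMap ℂ K w₀)
    (hw : w^2+w+1 = 0) (h1 : hh w l t u ≠ 0) (h2' : ss w l t u ≠ 0) (h3 : X0 w l t u ≠ 0)
    (h4 : h2 w l t u ≠ 0) (hY : ∀ i, Y w l t u i ∈ S) : l ∈ S ∧ t ∈ S ∧ u ∈ S := by
  haveI : CharZero K := charZero_of_injective_algebraMap (algebraMap ℂ K).injective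
  have E2 := E2_holds w l t u hw
  have hx : X0 w l t u = 2 * hh w l t u + 2 * LL w l t u := rfl
  have hh2 : h2 w l t u = hh w l t u - LL w l t u - MM w l t u := rfl
  have hL : LL w l t u = ss w l t u - w^2 * MM w l t u - l*(l-w^2) * hh w l t u := rfl
  have hd : dd w l t u = t * ss w l t u + w^2 * MM w l t u + l*(l+w-1) * hh w l t u := rfl
  have he : ee w l t u = u * ss w l t u + MM w l t u + 2*w^2*l * hh w l t u := rfl
  have y0 : (2*hh w l t u - LL w l t u + (w^2-w)*dd w l t u) / X0 w l t u ∈ S := hY 0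
  have y1 : (2*hh w l t u - LL w l t u - (w^2-w)*dd w l t u) / X0 w l t u ∈ S := hY 1
  have y2 : (-2*hh w l t u - 2*MM w l t u) / X0 w l t u ∈ S := hY 2
  have y3 : (-2*hh w l t u + MM w l t u - (w^2-w)*ee w l t u) / X0 w l t u ∈ S := hY 3
  clear hY
  generalize X0 w l t u = x at *
  generalize hh w l t u = h at *
  generalize LL w l t u = L at *
  generalize MM w l t u = M at *
  generalize dd w l t u = d at *
  generalize ee w l t u = e at *
  generalize ss w l t u = s at *
  generalize h2 w l t u = g at *
  have hθ : w^2 - w ≠ 0 := by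
    intro h0
    have : (3 : K) = 0 := by linear_combination (w^2-3*w+3)*hw - (w^2 - w)*h0
    norm_num at this
  have Sw : w ∈ S := hw₀ ▸ S.algebraMap_mem w₀
  have Sn : ∀ n : ℕ, (n : K) ∈ S := fun n => natCast_mem S n
  have Sh : h / x ∈ S := by
    have : h / x = (1 + (2*h - L + (w^2-w)*d)/x + (2*h-L-(w^2-w)*d)/x) / (6 : ℕ) := by
      push_cast; field_simp; rw [hx]; ring
    rw [this]
    exact div_mem (add_mem (add_mem (one_mem _) y0) y1) (Sn 6)
  have SL : L / x ∈ S := by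
    have : L / x = 1 / (2 : ℕ) - h / x := by push_cast; field_simp; rw [hx]; ring
    rw [this]
    exact sub_mem (div_mem (one_mem _) (Sn 2)) Sh
  have SM : M / x ∈ S := by
    have : M / x = - ((-2*h-2*M)/x) / (2 : ℕ) - h / x := by push_cast; field_simp; ring
    rw [this]
    exact sub_mem (div_mem (neg_mem y2) (Sn 2)) Sh
  have Sθ : w^2 - w ∈ S := sub_mem (pow_mem Sw 2) Sw
  have Sd : d / x ∈ S := by
    have : d / x = ((2*h - L + (w^2-w)*d)/x - (2*h-L-(w^2-w)*d)/x) / ((2 : ℕ) * (w^2-w)) := by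
      push_cast
      generalize w^2 - w = θ at *
      field_simp; ring
    rw [this]
    exact div_mem (sub_mem y0 y1) (mul_mem (Sn 2) Sθ)
  have Se : e / x ∈ S := by
    have : e / x = (M / x - (2 : ℕ) * (h / x) - (-2*h+M-(w^2-w)*e)/x) / (w^2-w) := by
      push_cast
      generalize w^2 - w = θ at *
      field_simp; ring
    rw [this]
    exact div_mem (sub_mem (sub_mem SM (mul_mem (Sn 2) Sh)) y3) Sθ
  have Sl : l ∈ S := by
    have : l = ((L/x)^2 + w*(M/x)^2 + (4:ℕ)*w*(h/x)*(L/x) + (4:ℕ)*(h/x)*(M/x) - (d/x)^2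
        - w*(e/x)^2) / ((4:ℕ) * (h/x) * (h/x - L/x - M/x)) := by
      have e1 : h/x - L/x - M/x = g/x := by rw [hh2]; ring
      rw [e1]; push_cast; field_simp
      rw [hh2]
      linear_combination E2
    rw [this]
    refine div_mem ?_ (mul_mem (mul_mem (Sn 4) Sh) (sub_mem (sub_mem Sh SL) SM))
    refine sub_mem (sub_mem (add_mem (add_mem (add_mem (pow_mem SL 2) (mul_mem Sw (pow_mem SM 2)))
      ?_) ?_) (pow_mem Sd 2)) (mul_mem Sw (pow_mem Se 2))
    · exact mul_mem (mul_mem (mul_mem (Sn 4) Sw) Sh) SL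
    · exact mul_mem (mul_mem (Sn 4) Sh) SM
  have Ss : s / x ∈ S := by
    have : s / x = L/x + w^2*(M/x) + l*(l-w^2)*(h/x) := by rw [hL]; ring
    rw [this]
    exact add_mem (add_mem SL (mul_mem (pow_mem Sw 2) SM))
      (mul_mem (mul_mem Sl (sub_mem Sl (pow_mem Sw 2))) Sh)
  refine ⟨Sl, ?_, ?_⟩
  · have : t = (d/x - w^2*(M/x) - l*(l+w-1)*(h/x)) / (s/x) := by
      field_simp; rw [hd]; ring
    rw [this]
    exact div_mem (sub_mem (sub_mem Sd (mul_mem (pow_mem Sw 2) SM))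
      (mul_mem (mul_mem Sl (sub_mem (add_mem Sl Sw) (one_mem _))) Sh)) Ss
  · have : u = (e/x - M/x - (2:ℕ)*w^2*l*(h/x)) / (s/x) := by
      push_cast; field_simp; rw [he]; ring
    rw [this]
    exact div_mem (sub_mem (sub_mem Se SM)
      (mul_mem (mul_mem (mul_mem (Sn 2) (pow_mem Sw 2)) Sl) Sh)) Ss

end Field

/-- Existence of a generic parametrisation. -/
lemma exists_param : ∃ y : Fin 4 → FractionRing (MvPolynomial (Fin 3) ℂ),
    aeval y Faff = 0 ∧
    ∀ S : IntermediateField ℂ (FractionRing (MvPolynomial (Fin 3) ℂ)),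
      (∀ i, y i ∈ S) → S = ⊤ := by
  obtain ⟨w, hw⟩ : ∃ w : ℂ, w^2+w+1 = 0 := by
    obtain ⟨θ, hθ⟩ := IsAlgClosed.exists_pow_nat_eq (-3 : ℂ) (n := 2) (by norm_num)
    exact ⟨(-1-θ)/2, by linear_combination hθ/4⟩
  let P := MvPolynomial (Fin 3) ℂ
  let K := FractionRing P
  let ι : P →+* K := algebraMap P K
  have hι : Function.Injective ι := IsFractionRing.injective P K
  have nz : ∀ p : P, eval ![1, 0, 0] p ≠ 0 → ι p ≠ 0 := by
    intro p hp h0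
    have : p = 0 := hι (by rw [h0, map_zero])
    exact hp (by rw [this, map_zero])
  have hC : ι (C w) = algebraMap ℂ K w := (IsScalarTower.algebraMap_apply ℂ P K w).symm
  obtain ⟨v1, v2, v3, v4⟩ := values w hw
  have n1 := nz (hh (C w) (X 0) (X 1) (X 2)) (by rw [map_hh]; simpa using v1)
  have n2 := nz (ss (C w) (X 0) (X 1) (X 2)) (by rw [map_ss]; simpa using v2)
  have n3 := nz (X0 (C w) (X 0) (X 1) (X 2)) (by rw [map_X0]; simpa using v3)
  have n4 := nz (h2 (C w) (X 0) (X 1) (X 2)) (by rw [map_h2]; simpa using v4)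
  rw [map_hh] at n1
  rw [map_ss] at n2
  rw [map_X0] at n3
  rw [map_h2] at n4
  have hw' : (ι (C w))^2 + ι (C w) + 1 = 0 := by
    rw [hC, ← map_pow, ← map_add, ← map_one (algebraMap ℂ K), ← map_add, hw, map_zero]
  refine ⟨Y (ι (C w)) (ι (X 0)) (ι (X 1)) (ι (X 2)), aeval_Y _ _ _ _ hw' n3, ?_⟩
  intro S hS
  obtain ⟨g0, g1, g2⟩ := gen_aux S w _ _ _ _ hC hw' n1 n2 n3 n4 hS
  have hp : ∀ p : P, ι p ∈ S := by
    intro p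
    induction p using MvPolynomial.induction_on with
    | C a =>
      rw [show ι (C a) = algebraMap ℂ K a from (IsScalarTower.algebraMap_apply ℂ P K a).symm]
      exact S.algebraMap_mem a
    | add p q hp hq => rw [map_add]; exact add_mem hp hq
    | mul_X p i hp =>
      rw [map_mul]
      refine mul_mem hp ?_
      fin_cases i
      · exact g0
      · exact g1
      · exact g2
  rw [eq_top_iff]
  intro z _
  obtain ⟨a, b, _, rfl⟩ := IsFractionRing.div_surjective (A := P) z
  exact div_mem (hp a) (hp b)

/-- The elements of a field algebraic over a subalgebra. -/
def algElems {K : Type*} [Field K] [Algebra ℂ K] (R : Subalgebra ℂ K) : IntermediateField ℂ K where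
  carrier := {z | IsAlgebraic R z}
  mul_mem' ha hb := IsAlgebraic.mul ha hb
  add_mem' ha hb := IsAlgebraic.add ha hb
  algebraMap_mem' r := isAlgebraic_algebraMap (R := R) (A := K) (algebraMap ℂ R r)
  inv_mem' _ ha := IsAlgebraic.inv_iff.2 ha

lemma algIndep (y : Fin 4 → FractionRing (MvPolynomial (Fin 3) ℂ))
    (h0 : aeval y Faff = 0)
    (hgen : ∀ S : IntermediateField ℂ (FractionRing (MvPolynomial (Fin 3) ℂ)),
      (∀ i, y i ∈ S) → S = ⊤) :
    AlgebraicIndependent ℂ (fun i : Fin 3 => y i.succ) := by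
  let P := MvPolynomial (Fin 3) ℂ
  let K := FractionRing P
  let x : Fin 3 → K := fun i => y i.succ
  let R := Algebra.adjoin ℂ (Set.range x)
  have hx : ∀ i, x i ∈ R := fun i => Algebra.subset_adjoin ⟨i, rfl⟩
  have hev : (G (x 0) (x 1) (x 2)).eval (y 0) = 0 := by
    have h := G_eval (x 0) (x 1) (x 2) (y 0)
    rw [aeval_Faff] at h0
    have h8 : (8 : K) ≠ 0 := by
      haveI : CharZero K := charZero_of_injective_algebraMap (algebraMap ℂ K).injective
      norm_num
    refine (mul_eq_zero.1 (h.trans ?_)).resolve_left h8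
    exact h0
  have htop : algElems R = ⊤ := by
    apply hgen
    intro i
    refine Fin.cases ?_ (fun j => ?_) i
    · refine ⟨G ⟨x 0, hx 0⟩ ⟨x 1, hx 1⟩ ⟨x 2, hx 2⟩, (G_monic _ _ _).ne_zero, ?_⟩
      have hm := G_map R.val ⟨x 0, hx 0⟩ ⟨x 1, hx 1⟩ ⟨x 2, hx 2⟩
      rw [← Polynomial.eval_map_algebraMap]
      rw [← hev]
      exact congrArg (Polynomial.eval (y 0)) hm
    · exact isAlgebraic_algebraMap (R := R) (A := K) ⟨x j, hx j⟩
  haveI : Algebra.IsAlgebraic R K := ⟨fun z => by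
    have : z ∈ algElems R := by rw [htop]; trivial
    exact this⟩
  have htr : Cardinal.mk (Fin 3) ≤ Algebra.trdeg ℂ K := by
    have hind : AlgebraicIndependent ℂ (fun i : Fin 3 => algebraMap P K (X i)) := by
      have := (MvPolynomial.algebraicIndependent_X (Fin 3) ℂ).map' (f := IsScalarTower.toAlgHom ℂ P K)
        (IsFractionRing.injective P K)
      exact this
    have := hind.lift_cardinalMk_le_trdeg
    simpa using this
  exact (Algebra.IsAlgebraic.isTranscendenceBasis_of_le_trdeg_of_finite ℂ x htr).1

lemma ker_eq (y : Fin 4 → FractionRing (MvPolynomial (Fin 3) ℂ))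
    (h0 : aeval y Faff = 0)
    (hind : AlgebraicIndependent ℂ (fun i : Fin 3 => y i.succ))
    (φ : (MvPolynomial (Fin 4) ℂ ⧸ Ideal.span {Faff}) →ₐ[ℂ] FractionRing (MvPolynomial (Fin 3) ℂ))
    (hφ : ∀ p, φ (Ideal.Quotient.mk _ p) = aeval y p) : Function.Injective φ := by
  let P := MvPolynomial (Fin 3) ℂ
  let A := MvPolynomial (Fin 4) ℂ ⧸ Ideal.span {Faff}
  haveI := Faff_prime
  haveI : IsDomain A := Ideal.Quotient.isDomain _
  let j : P →ₐ[ℂ] A := (Ideal.Quotient.mkₐ ℂ (Ideal.span {Faff})).comp (rename Fin.succ)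
  letI : Algebra P A := j.toRingHom.toAlgebra
  have hj : ∀ p : P, algebraMap P A p = Ideal.Quotient.mk _ (rename Fin.succ p) := fun p => rfl
  have hX0 : IsIntegral P (Ideal.Quotient.mk (Ideal.span {Faff}) (X 0) : A) := by
    refine ⟨G (X 0 : P) (X 1) (X 2), G_monic _ _ _, ?_⟩
    rw [Polynomial.eval₂_eq_eval_map]
    have hm := G_map j (X 0) (X 1) (X 2)
    have hm' : Polynomial.map (algebraMap P A) (G (X 0 : P) (X 1) (X 2)) =
      G (j (X 0)) (j (X 1)) (j (X 2)) := hm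
    rw [hm']
    have hu : IsUnit (8 : A) := by
      have := (IsUnit.mk0 (8 : ℂ) (by norm_num)).map (algebraMap ℂ A)
      rwa [map_ofNat] at this
    have h := G_eval (j (X 0)) (j (X 1)) (j (X 2)) (Ideal.Quotient.mk (Ideal.span {Faff}) (X 0) : A)
    refine (hu.mul_right_eq_zero).1 (h.trans ?_)
    have hF := aeval_Faff (fun i => (Ideal.Quotient.mk (Ideal.span {Faff}) (X i) : A))
    have hz : aeval (fun i => (Ideal.Quotient.mk (Ideal.span {Faff}) (X i) : A)) Faff = 0 := by
      have := MvPolynomial.comp_aeval_apply (X : Fin 4 → MvPolynomial (Fin 4) ℂ)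
        (Ideal.Quotient.mkₐ ℂ (Ideal.span {Faff})) Faff
      rw [aeval_X_left_apply] at this
      refine this.symm.trans ?_
      exact Ideal.Quotient.eq_zero_iff_mem.2 (Ideal.mem_span_singleton_self _)
    rw [hz] at hF
    have j0 : j (X 0) = Ideal.Quotient.mk (Ideal.span {Faff}) (X 1) := congrArg (Ideal.Quotient.mk (Ideal.span {Faff})) (rename_X (R := ℂ) Fin.succ (0 : Fin 3))
    have j1 : j (X 1) = Ideal.Quotient.mk (Ideal.span {Faff}) (X 2) := congrArg (Ideal.Quotient.mk (Ideal.span {Faff})) (rename_X (R := ℂ) Fin.succ (1 : Fin 3))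
    have j2 : j (X 2) = Ideal.Quotient.mk (Ideal.span {Faff}) (X 3) := congrArg (Ideal.Quotient.mk (Ideal.span {Faff})) (rename_X (R := ℂ) Fin.succ (2 : Fin 3))
    rw [j0, j1, j2]
    exact hF.symm
  have hpint : ∀ p : MvPolynomial (Fin 4) ℂ,
      IsIntegral P (Ideal.Quotient.mk (Ideal.span {Faff}) p : A) := by
    intro p
    induction p using MvPolynomial.induction_on with
    | C a =>
      have : (Ideal.Quotient.mk (Ideal.span {Faff}) (C a) : A) = algebraMap P A (C a) := by
        rw [hj, rename_C]
      rw [this]; exact isIntegral_algebraMap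
    | add p q hp hq => rw [map_add]; exact hp.add hq
    | mul_X p i hp =>
      rw [map_mul]
      refine hp.mul ?_
      refine Fin.cases hX0 (fun k => ?_) i
      have : (Ideal.Quotient.mk (Ideal.span {Faff}) (X k.succ) : A) = algebraMap P A (X k) := by
        rw [hj, rename_X]
      rw [this]; exact isIntegral_algebraMap
  haveI : Algebra.IsIntegral P A := ⟨fun z => by
    obtain ⟨p, rfl⟩ := Ideal.Quotient.mk_surjective z
    exact hpint p⟩
  rw [← AlgHom.coe_toRingHom, RingHom.injective_iff_ker_eq_bot]
  apply Ideal.eq_bot_of_comap_eq_bot (R := P)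
  rw [eq_bot_iff]
  intro p hp
  rw [Ideal.mem_comap, RingHom.mem_ker, hj] at hp
  have h1 : aeval (fun i : Fin 3 => y i.succ) p = 0 := by
    have := (hφ (rename Fin.succ p)).symm.trans hp
    rwa [aeval_rename] at this
  exact (injective_iff_map_eq_zero _).1 hind p h1

end X6

/-- X₆ is rational: the ideal (F) is prime, and the fraction field of
ℂ[y₁,…,y₄]/(F) is isomorphic, as a ℂ-algebra, to the field of rational
functions in three variables. -/
theorem X6_is_rational :
    (Ideal.span {Faff}).IsPrime ∧
    Nonempty ((FractionRing (MvPolynomial (Fin 4) ℂ ⧸ Ideal.span {Faff})) ≃ₐ[ℂ]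
      FractionRing (MvPolynomial (Fin 3) ℂ)) := by
  haveI hprime := X6.Faff_prime
  refine ⟨hprime, ?_⟩
  haveI : IsDomain (MvPolynomial (Fin 4) ℂ ⧸ Ideal.span {Faff}) := Ideal.Quotient.isDomain _
  obtain ⟨y, h0, hgen⟩ := X6.exists_param
  have hle : ∀ a ∈ Ideal.span {Faff}, aeval y a = 0 := by
    intro a ha
    obtain ⟨b, rfl⟩ := Ideal.mem_span_singleton.1 ha
    rw [map_mul, h0, zero_mul]
  let φ := Ideal.Quotient.liftₐ (Ideal.span {Faff}) (aeval y) hle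
  have hφ : ∀ p, φ (Ideal.Quotient.mk _ p) = aeval y p := fun p => rfl
  have hinj := X6.ker_eq y h0 (X6.algIndep y h0 hgen) φ hφ
  let Ψ : FractionRing (MvPolynomial (Fin 4) ℂ ⧸ Ideal.span {Faff}) →ₐ[ℂ]
      FractionRing (MvPolynomial (Fin 3) ℂ) := IsFractionRing.liftAlgHom (g := φ) hinj
  have hΨ : Ψ.fieldRange = ⊤ := by
    apply hgen
    intro i
    refine ⟨algebraMap _ _ (Ideal.Quotient.mk (Ideal.span {Faff}) (X i)), ?_⟩
    have : Ψ (algebraMap _ _ (Ideal.Quotient.mk (Ideal.span {Faff}) (X i))) =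
      φ (Ideal.Quotient.mk _ (X i)) := IsFractionRing.lift_algebraMap hinj _
    refine this.trans ?_
    rw [hφ, aeval_X]
  refine ⟨AlgEquiv.ofBijective Ψ ⟨Ψ.toRingHom.injective, fun z => ?_⟩⟩
  have : z ∈ Ψ.fieldRange := by rw [hΨ]; trivial
  exact this
end

section
/- Substituting x₄ := −(x₁+x₃) and x₅ := −(x₀+x₂) into f yields the polynomial identity f(x₀, x₁, x₂, x₃, −(x₁+x₃), −(x₀+x₂)) = 8·q₁·q₂ in ℂ[x₀,x₁,x₂,x₃]. (In other words, the intersection of X with the projective subspace ℙ³ = {x₀+x₂+x₅ = x₁+x₃+x₄ = 0} is the union of the two quadric surfaces Q₁ + Q₂.) -/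
open MvPolynomial

/-- The quadric q₁ = x₀²+x₀x₂+x₂² + w·(x₁²+x₁x₃+x₃²) in ℂ[x₀,x₁,x₂,x₃]. -/
noncomputable def q1 (w : ℂ) : MvPolynomial (Fin 4) ℂ :=
  X 0 ^ 2 + X 0 * X 2 + X 2 ^ 2 + C w * (X 1 ^ 2 + X 1 * X 3 + X 3 ^ 2)

/-- The quadric q₂ = x₀²+x₀x₂+x₂² − (w+1)·(x₁²+x₁x₃+x₃²) in ℂ[x₀,x₁,x₂,x₃]. -/
noncomputable def q2 (w : ℂ) : MvPolynomial (Fin 4) ℂ :=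
  X 0 ^ 2 + X 0 * X 2 + X 2 ^ 2 - C (w + 1) * (X 1 ^ 2 + X 1 * X 3 + X 3 ^ 2)

/-- Substituting x₄ := −(x₁+x₃) and x₅ := −(x₀+x₂) into f gives 8·q₁·q₂;
i.e. X ∩ {x₀+x₂+x₅ = x₁+x₃+x₄ = 0} is the union of the two quadrics Q₁ + Q₂. -/
theorem f_restricted_to_P3_splits (w : ℂ) (hw : w ^ 2 + w + 1 = 0) :
    MvPolynomial.aeval ![X 0, X 1, X 2, X 3, -(X 1 + X 3), -(X 0 + X 2)] f6 =
      8 * q1 w * q2 w := by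
  have h : (C w ^ 2 + C w + 1 : MvPolynomial (Fin 4) ℂ) = 0 := by
    have := congrArg (C : ℂ → MvPolynomial (Fin 4) ℂ) hw
    simpa using this
  have h6 : MvPolynomial.aeval (R := ℂ) (S₁ := MvPolynomial (Fin 4) ℂ)
      ![X 0, X 1, X 2, X 3, -(X 1 + X 3), -(X 0 + X 2)] (6 : MvPolynomial (Fin 6) ℂ) = 6 :=
    map_ofNat _ 6
  simp only [f6, q1, q2, Fin.sum_univ_six, map_sub, map_mul, map_add, map_pow, aeval_X, h6, C_1]
  simp only [Matrix.cons_val]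
  linear_combination (8 * (X 1 ^ 2 + X 1 * X 3 + X 3 ^ 2) ^ 2) * h
end

section
/- The point o := (1, 1, w, w, w², w²) ∈ ℂ⁶ represents a singular point of the quartic X: one has ℓ(o) = 0, f(o) = 0, and ∂f/∂xᵢ evaluated at o equals 24 for every i ∈ {0,…,5}; in particular the gradient of f at o is proportional to the gradient (1,…,1) of ℓ, so the Jacobian of (ℓ, f) at o has rank ≤ 1. -/
open MvPolynomial

/-- The hyperplane section ℓ = ∑xᵢ. -/
noncomputable def l6 : MvPolynomial (Fin 6) ℂ := ∑ i : Fin 6, X i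

/-- The point o = (1, 1, w, w, w², w²) ∈ ℂ⁶. -/
def pt (w : ℂ) : Fin 6 → ℂ := ![1, 1, w, w, w ^ 2, w ^ 2]

/-- The 2×6 Jacobian matrix of (ℓ, f) evaluated at a point p ∈ ℂ⁶. -/
noncomputable def jac (p : Fin 6 → ℂ) : Matrix (Fin 2) (Fin 6) ℂ :=
  Matrix.of ![fun i => MvPolynomial.eval p (MvPolynomial.pderiv i l6),
              fun i => MvPolynomial.eval p (MvPolynomial.pderiv i f6)]

theorem eval_l6_pderiv (p : Fin 6 → ℂ) (i : Fin 6) : eval p (pderiv i l6) = 1 := by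
  simp [l6, pderiv_X, Pi.single_apply]

theorem eval_f6_pderiv (p : Fin 6 → ℂ) (i : Fin 6) :
    eval p (pderiv i f6) = 24 * p i ^ 3 - 4 * p i * ∑ j, p j ^ 2 := by
  have h6 : (6 : MvPolynomial (Fin 6) ℂ) = C 6 := (map_ofNat C 6).symm
  rw [f6, h6]
  simp [pderiv_X, Pi.single_apply, Derivation.leibniz_pow, Derivation.leibniz, pderiv_C]
  ring

/-- The point o = (1,1,w,w,w²,w²) is a singular point of X: ℓ(o) = 0, f(o) = 0,
∂f/∂xᵢ(o) = 24 for every i, so the gradient of f at o is proportional to the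
gradient (1,…,1) of ℓ and the Jacobian of (ℓ, f) at o has rank ≤ 1. -/
theorem o_is_singular_point (w : ℂ) (hw : w ^ 2 + w + 1 = 0) :
    MvPolynomial.eval (pt w) l6 = 0 ∧
    MvPolynomial.eval (pt w) f6 = 0 ∧
    (∀ i : Fin 6, MvPolynomial.eval (pt w) (MvPolynomial.pderiv i f6) = 24) ∧
    (jac (pt w)).rank ≤ 1 := by
  have h3 : w ^ 3 = 1 := by linear_combination (w - 1) * hw
  have hS2 : ∑ j, pt w j ^ 2 = 0 := by
    simp [pt, Fin.sum_univ_succ]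
    linear_combination 2 * hw + 2 * w * h3
  have hS4 : ∑ j, pt w j ^ 4 = 0 := by
    simp [pt, Fin.sum_univ_succ]
    linear_combination 2 * hw + 2 * w * h3 + 2 * w ^ 2 * (w ^ 3 + 1) * h3
  have hg : ∀ i : Fin 6, eval (pt w) (pderiv i f6) = 24 := by
    intro i
    rw [eval_f6_pderiv, hS2]
    have : pt w i ^ 3 = 1 := by
      fin_cases i <;> simp [pt, h3] <;> linear_combination (w ^ 3 + 1) * h3
    rw [this]; ring
  refine ⟨?_, ?_, hg, ?_⟩
  · simp [l6, pt, Fin.sum_univ_succ]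
    linear_combination 2 * hw
  · simp [f6, hS2, hS4]
  · have : jac (pt w) = Matrix.vecMulVec ![1, 24] (fun _ => 1) := by
      ext a i
      fin_cases a
      · simp [jac, Matrix.vecMulVec_apply, eval_l6_pderiv]
      · simp [jac, Matrix.vecMulVec_apply, hg]
    rw [this]
    exact Matrix.rank_vecMulVec_le _ _
end

section
/- For each i ∈ {1,2} and each c ∈ {0,1,2,3}, the point o = (1, 1, w, w, w², w²) belongs to τ^c(Q_i) if and only if c = 0 or c = 2. -/
/-- The coordinate permutation τ = (0 4 1 3) on six letters. -/
def τ6 : Equiv.Perm (Fin 6) := c[0, 4, 1, 3]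

/-- The coordinate permutation h = (2 0 4 3 1) on six letters. -/
def h6 : Equiv.Perm (Fin 6) := c[2, 0, 4, 3, 1]

/-- The action of a coordinate permutation σ on a point p ∈ ℂ⁶: (σ·p)_j = p_{σ⁻¹(j)}. -/
def act (σ : Equiv.Perm (Fin 6)) (p : Fin 6 → ℂ) : Fin 6 → ℂ := fun j => p (σ⁻¹ j)

/-- The affine cone over the quadric Q₁ ⊂ ℙ³ = {x₀+x₂+x₅ = x₁+x₃+x₄ = 0}. -/
def Q1 (w : ℂ) : Set (Fin 6 → ℂ) :=
  {p | p 0 + p 2 + p 5 = 0 ∧ p 1 + p 3 + p 4 = 0 ∧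
    p 0 ^ 2 + p 0 * p 2 + p 2 ^ 2 + w * (p 1 ^ 2 + p 1 * p 3 + p 3 ^ 2) = 0}

/-- The affine cone over the quadric Q₂ ⊂ ℙ³ = {x₀+x₂+x₅ = x₁+x₃+x₄ = 0}. -/
def Q2 (w : ℂ) : Set (Fin 6 → ℂ) :=
  {p | p 0 + p 2 + p 5 = 0 ∧ p 1 + p 3 + p 4 = 0 ∧
    p 0 ^ 2 + p 0 * p 2 + p 2 ^ 2 - (w + 1) * (p 1 ^ 2 + p 1 * p 3 + p 3 ^ 2) = 0}

/-- Membership in the image under the action, pulled back to the point itself. -/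
theorem mem_act_image (σ : Equiv.Perm (Fin 6)) (Q : Set (Fin 6 → ℂ)) (x : Fin 6 → ℂ) :
    x ∈ act σ '' Q ↔ (fun j => x (σ j)) ∈ Q := by
  constructor
  · rintro ⟨p, hp, rfl⟩
    simpa [act] using hp
  · intro h
    exact ⟨_, h, by funext j; simp [act]⟩

/-- For each i ∈ {1,2} and 0 ≤ c ≤ 3, the point o belongs to τ^c(Q_i)
iff c = 0 or c = 2. -/
theorem o_mem_tau_pow_Q_iff (w : ℂ) (hw : w ^ 2 + w + 1 = 0) :
    ∀ Q ∈ ({Q1 w, Q2 w} : Set (Set (Fin 6 → ℂ))), ∀ c : ℕ, c ≤ 3 →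
      (pt w ∈ act (τ6 ^ c) '' Q ↔ c = 0 ∨ c = 2) := by
  have hw1 : w ^ 2 + w + w ^ 2 ≠ 0 := by
    intro h
    have h3 : (3 : ℂ) = 0 := by linear_combination h - hw - (w - 2) * (2 * hw - h)
    norm_num at h3
  have hw3 : w + w + w ^ 2 ≠ 0 := by
    intro h
    have h1 : w = 1 := by linear_combination h - hw
    rw [h1] at hw
    norm_num at hw
  have a0 : ∀ j, (τ6 ^ 0) j = (![0, 1, 2, 3, 4, 5] : Fin 6 → Fin 6) j := by decide
  have a1 : ∀ j, (τ6 ^ 1) j = (![4, 3, 2, 0, 1, 5] : Fin 6 → Fin 6) j := by decide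
  have a2 : ∀ j, (τ6 ^ 2) j = (![1, 0, 2, 4, 3, 5] : Fin 6 → Fin 6) j := by decide
  have a3 : ∀ j, (τ6 ^ 3) j = (![3, 4, 2, 1, 0, 5] : Fin 6 → Fin 6) j := by decide
  intro Q hQ c hc
  rw [mem_act_image]
  rcases hQ with rfl | rfl
  · interval_cases c
    · simp only [a0]
      simp [Q1, pt]
      grind
    · simp only [a1]
      simp [Q1, pt, hw1]
    · simp only [a2]
      simp [Q1, pt]
      grind
    · simp only [a3]
      simp [Q1, pt, hw3]
  · interval_cases c
    · simp only [a0]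
      simp [Q2, pt]
      grind
    · simp only [a1]
      simp [Q2, pt, hw1]
    · simp only [a2]
      simp [Q2, pt]
      grind
    · simp only [a3]
      simp [Q2, pt, hw3]
end

section
/- For each i ∈ {1,2}, each a ∈ {0,1,2,3,4} and each b ∈ {0,1,2,3}, the point o = (1, 1, w, w, w², w²) belongs to h^a τ^b (Q_i) if and only if (a,b) ∈ {(0,0), (3,0), (4,0), (0,2), (3,3), (1,2), (4,2), (1,1)}. -/
/-- The exponent of `w` in the `j`-th coordinate of the point `o`. -/
def expo : Fin 6 → Fin 3 := ![0, 0, 1, 1, 2, 2]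

theorem pt_eq (w : ℂ) (j : Fin 6) : pt w j = w ^ (expo j : ℕ) := by
  fin_cases j <;> simp [pt, expo]

theorem sum_iff (w : ℂ) (hw : w ^ 2 + w + 1 = 0) (x y z : Fin 3) :
    w ^ (x : ℕ) + w ^ (y : ℕ) + w ^ (z : ℕ) = 0 ↔ x ≠ y ∧ y ≠ z ∧ x ≠ z := by
  have hw3 : w ^ 3 = 1 := by linear_combination (w - 1) * hw
  have h0 : w ≠ 0 := by
    rintro rfl
    norm_num at hw
  have h1 : w ≠ 1 := by
    rintro rfl
    norm_num at hw
  fin_cases x <;> fin_cases y <;> fin_cases z <;> simp <;> grind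

theorem quad_zero (w : ℂ) (hw : w ^ 2 + w + 1 = 0) (x y : Fin 3) (hxy : x ≠ y) :
    (w ^ (x : ℕ)) ^ 2 + w ^ (x : ℕ) * w ^ (y : ℕ) + (w ^ (y : ℕ)) ^ 2 = 0 := by
  fin_cases x <;> fin_cases y <;> simp at hxy ⊢ <;> grind

theorem mem_image_act (σ : Equiv.Perm (Fin 6)) (Q : Set (Fin 6 → ℂ)) (o : Fin 6 → ℂ) :
    o ∈ act σ '' Q ↔ (fun j => o (σ j)) ∈ Q := by
  constructor
  · rintro ⟨p, hp, rfl⟩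
    simpa [act] using hp
  · intro h
    exact ⟨_, h, by funext j; simp [act]⟩

/-- Both families of coordinates carry pairwise distinct exponents. -/
def Good (σ : Equiv.Perm (Fin 6)) : Prop :=
  (expo (σ 0) ≠ expo (σ 2) ∧ expo (σ 2) ≠ expo (σ 5) ∧ expo (σ 0) ≠ expo (σ 5)) ∧
  (expo (σ 1) ≠ expo (σ 3) ∧ expo (σ 3) ≠ expo (σ 4) ∧ expo (σ 1) ≠ expo (σ 4))

instance (σ : Equiv.Perm (Fin 6)) : Decidable (Good σ) := by
  unfold Good; infer_instance

theorem mem_iff_good (w : ℂ) (hw : w ^ 2 + w + 1 = 0) (σ : Equiv.Perm (Fin 6))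
    (Q : Set (Fin 6 → ℂ)) (hQ : Q = Q1 w ∨ Q = Q2 w) :
    pt w ∈ act σ '' Q ↔ Good σ := by
  rw [mem_image_act]
  rcases hQ with rfl | rfl
  all_goals
    simp only [Q1, Q2, Set.mem_ofPred_eq, pt_eq, sum_iff w hw, Good]
    constructor
    · rintro ⟨h1, h2, -⟩
      exact ⟨h1, h2⟩
    · rintro ⟨h1, h2⟩
      refine ⟨h1, h2, ?_⟩
      rw [quad_zero w hw _ _ h1.1, quad_zero w hw _ _ h2.1]
      ring

theorem good_table : ∀ a : Fin 5, ∀ b : Fin 4, Good (h6 ^ (a : ℕ) * τ6 ^ (b : ℕ)) ↔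
    ((a : ℕ), (b : ℕ)) ∈ ([(0, 0), (3, 0), (4, 0), (0, 2), (3, 3), (1, 2), (4, 2), (1, 1)] :
      List (ℕ × ℕ)) := by
  set_option maxRecDepth 100000 in
  decide

/-- For each i ∈ {1,2}, 0 ≤ a ≤ 4 and 0 ≤ b ≤ 3, the point o belongs to
h^a τ^b (Q_i) iff (a,b) is one of the eight listed pairs. -/
theorem o_mem_h_pow_tau_pow_Q_iff (w : ℂ) (hw : w ^ 2 + w + 1 = 0) :
    ∀ Q ∈ ({Q1 w, Q2 w} : Set (Set (Fin 6 → ℂ))), ∀ a b : ℕ, a ≤ 4 → b ≤ 3 →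
      (pt w ∈ act (h6 ^ a * τ6 ^ b) '' Q ↔
        (a, b) ∈ ({(0, 0), (3, 0), (4, 0), (0, 2), (3, 3), (1, 2), (4, 2), (1, 1)} :
          Set (ℕ × ℕ))) := by
  intro Q hQ a b ha hb
  rw [mem_iff_good w hw _ Q (by simpa using hQ)]
  have h := good_table ⟨a, by omega⟩ ⟨b, by omega⟩
  rw [h]
  simp
end

section
/- For each i ∈ {1,2} the following equalities and inequalities of subsets of ℂ⁶ hold: (a) τ²(Q_i) = h⁴(Q_i), this set contains o, and τ²(Q_i) ≠ Q_i; (b) h⁴τ²(Q_i) = h³(Q_i), this set contains o, and h⁴τ²(Q_i) is different from both Q_i and τ²(Q_i); (c) hτ²(Q_i) = Q_i; (d) h³τ³(Q_i) = hτ(Q_i), this set contains o, and h³τ³(Q_i) is different from Q_i, τ²(Q_i) and h⁴τ²(Q_i). -/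
theorem Q2_eq (w : ℂ) : Q2 w = Q1 (-(w + 1)) := by
  ext p
  simp only [Q1, Q2, Set.mem_ofPred_eq, neg_mul, sub_eq_add_neg]

theorem mem_act_Q1 (σ : Equiv.Perm (Fin 6)) (c : ℂ) (x : Fin 6 → ℂ) :
    x ∈ act σ '' Q1 c ↔
      x (σ 0) + x (σ 2) + x (σ 5) = 0 ∧ x (σ 1) + x (σ 3) + x (σ 4) = 0 ∧
      x (σ 0) ^ 2 + x (σ 0) * x (σ 2) + x (σ 2) ^ 2
        + c * (x (σ 1) ^ 2 + x (σ 1) * x (σ 3) + x (σ 3) ^ 2) = 0 := by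
  rw [mem_act_image]; rfl

theorem ne_of_mem {A B : Set (Fin 6 → ℂ)} (x : Fin 6 → ℂ) (hB : x ∈ B) (hA : x ∉ A) : A ≠ B := by
  rintro rfl; exact hA hB

theorem mem_t2 (c : ℂ) (x : Fin 6 → ℂ) :
    x ∈ act (τ6 ^ 2) '' Q1 c ↔
      x 1 + x 2 + x 5 = 0 ∧ x 0 + x 4 + x 3 = 0 ∧
      x 1 ^ 2 + x 1 * x 2 + x 2 ^ 2
        + c * (x 0 ^ 2 + x 0 * x 4 + x 4 ^ 2) = 0 := by
  rw [mem_act_Q1]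
  rw [show (τ6 ^ 2) 0 = 1 by decide +kernel]
  rw [show (τ6 ^ 2) 1 = 0 by decide +kernel]
  rw [show (τ6 ^ 2) 2 = 2 by decide +kernel]
  rw [show (τ6 ^ 2) 3 = 4 by decide +kernel]
  rw [show (τ6 ^ 2) 4 = 3 by decide +kernel]
  rw [show (τ6 ^ 2) 5 = 5 by decide +kernel]

theorem mem_h4 (c : ℂ) (x : Fin 6 → ℂ) :
    x ∈ act (h6 ^ 4) '' Q1 c ↔
      x 2 + x 1 + x 5 = 0 ∧ x 3 + x 4 + x 0 = 0 ∧
      x 2 ^ 2 + x 2 * x 1 + x 1 ^ 2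
        + c * (x 3 ^ 2 + x 3 * x 4 + x 4 ^ 2) = 0 := by
  rw [mem_act_Q1]
  rw [show (h6 ^ 4) 0 = 2 by decide +kernel]
  rw [show (h6 ^ 4) 1 = 3 by decide +kernel]
  rw [show (h6 ^ 4) 2 = 1 by decide +kernel]
  rw [show (h6 ^ 4) 3 = 4 by decide +kernel]
  rw [show (h6 ^ 4) 4 = 0 by decide +kernel]
  rw [show (h6 ^ 4) 5 = 5 by decide +kernel]

theorem mem_h4t2 (c : ℂ) (x : Fin 6 → ℂ) :
    x ∈ act (h6 ^ 4 * τ6 ^ 2) '' Q1 c ↔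
      x 3 + x 1 + x 5 = 0 ∧ x 2 + x 0 + x 4 = 0 ∧
      x 3 ^ 2 + x 3 * x 1 + x 1 ^ 2
        + c * (x 2 ^ 2 + x 2 * x 0 + x 0 ^ 2) = 0 := by
  rw [mem_act_Q1]
  rw [show (h6 ^ 4 * τ6 ^ 2) 0 = 3 by decide +kernel]
  rw [show (h6 ^ 4 * τ6 ^ 2) 1 = 2 by decide +kernel]
  rw [show (h6 ^ 4 * τ6 ^ 2) 2 = 1 by decide +kernel]
  rw [show (h6 ^ 4 * τ6 ^ 2) 3 = 0 by decide +kernel]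
  rw [show (h6 ^ 4 * τ6 ^ 2) 4 = 4 by decide +kernel]
  rw [show (h6 ^ 4 * τ6 ^ 2) 5 = 5 by decide +kernel]

theorem mem_h3 (c : ℂ) (x : Fin 6 → ℂ) :
    x ∈ act (h6 ^ 3) '' Q1 c ↔
      x 1 + x 3 + x 5 = 0 ∧ x 4 + x 0 + x 2 = 0 ∧
      x 1 ^ 2 + x 1 * x 3 + x 3 ^ 2
        + c * (x 4 ^ 2 + x 4 * x 0 + x 0 ^ 2) = 0 := by
  rw [mem_act_Q1]
  rw [show (h6 ^ 3) 0 = 1 by decide +kernel]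
  rw [show (h6 ^ 3) 1 = 4 by decide +kernel]
  rw [show (h6 ^ 3) 2 = 3 by decide +kernel]
  rw [show (h6 ^ 3) 3 = 0 by decide +kernel]
  rw [show (h6 ^ 3) 4 = 2 by decide +kernel]
  rw [show (h6 ^ 3) 5 = 5 by decide +kernel]

theorem mem_ht2 (c : ℂ) (x : Fin 6 → ℂ) :
    x ∈ act (h6 * τ6 ^ 2) '' Q1 c ↔
      x 2 + x 0 + x 5 = 0 ∧ x 4 + x 3 + x 1 = 0 ∧
      x 2 ^ 2 + x 2 * x 0 + x 0 ^ 2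
        + c * (x 4 ^ 2 + x 4 * x 3 + x 3 ^ 2) = 0 := by
  rw [mem_act_Q1]
  rw [show (h6 * τ6 ^ 2) 0 = 2 by decide +kernel]
  rw [show (h6 * τ6 ^ 2) 1 = 4 by decide +kernel]
  rw [show (h6 * τ6 ^ 2) 2 = 0 by decide +kernel]
  rw [show (h6 * τ6 ^ 2) 3 = 3 by decide +kernel]
  rw [show (h6 * τ6 ^ 2) 4 = 1 by decide +kernel]
  rw [show (h6 * τ6 ^ 2) 5 = 5 by decide +kernel]

theorem mem_h3t3 (c : ℂ) (x : Fin 6 → ℂ) :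
    x ∈ act (h6 ^ 3 * τ6 ^ 3) '' Q1 c ↔
      x 0 + x 3 + x 5 = 0 ∧ x 2 + x 4 + x 1 = 0 ∧
      x 0 ^ 2 + x 0 * x 3 + x 3 ^ 2
        + c * (x 2 ^ 2 + x 2 * x 4 + x 4 ^ 2) = 0 := by
  rw [mem_act_Q1]
  rw [show (h6 ^ 3 * τ6 ^ 3) 0 = 0 by decide +kernel]
  rw [show (h6 ^ 3 * τ6 ^ 3) 1 = 2 by decide +kernel]
  rw [show (h6 ^ 3 * τ6 ^ 3) 2 = 3 by decide +kernel]
  rw [show (h6 ^ 3 * τ6 ^ 3) 3 = 4 by decide +kernel]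
  rw [show (h6 ^ 3 * τ6 ^ 3) 4 = 1 by decide +kernel]
  rw [show (h6 ^ 3 * τ6 ^ 3) 5 = 5 by decide +kernel]

theorem mem_ht (c : ℂ) (x : Fin 6 → ℂ) :
    x ∈ act (h6 * τ6) '' Q1 c ↔
      x 3 + x 0 + x 5 = 0 ∧ x 1 + x 4 + x 2 = 0 ∧
      x 3 ^ 2 + x 3 * x 0 + x 0 ^ 2
        + c * (x 1 ^ 2 + x 1 * x 4 + x 4 ^ 2) = 0 := by
  rw [mem_act_Q1]
  rw [show (h6 * τ6) 0 = 3 by decide +kernel]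
  rw [show (h6 * τ6) 1 = 1 by decide +kernel]
  rw [show (h6 * τ6) 2 = 0 by decide +kernel]
  rw [show (h6 * τ6) 3 = 4 by decide +kernel]
  rw [show (h6 * τ6) 4 = 2 by decide +kernel]
  rw [show (h6 * τ6) 5 = 5 by decide +kernel]

theorem mem_id (c : ℂ) (x : Fin 6 → ℂ) :
    x ∈ Q1 c ↔
      x 0 + x 2 + x 5 = 0 ∧ x 1 + x 3 + x 4 = 0 ∧
      x 0 ^ 2 + x 0 * x 2 + x 2 ^ 2 + c * (x 1 ^ 2 + x 1 * x 3 + x 3 ^ 2) = 0 := Iff.rfl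

theorem images_aux (w c : ℂ) (hw : w ^ 2 + w + 1 = 0) :
      (act (τ6 ^ 2) '' Q1 c = act (h6 ^ 4) '' Q1 c ∧
        pt w ∈ act (τ6 ^ 2) '' Q1 c ∧
        act (τ6 ^ 2) '' Q1 c ≠ Q1 c) ∧
      (act (h6 ^ 4 * τ6 ^ 2) '' Q1 c = act (h6 ^ 3) '' Q1 c ∧
        pt w ∈ act (h6 ^ 4 * τ6 ^ 2) '' Q1 c ∧
        act (h6 ^ 4 * τ6 ^ 2) '' Q1 c ≠ Q1 c ∧
        act (h6 ^ 4 * τ6 ^ 2) '' Q1 c ≠ act (τ6 ^ 2) '' Q1 c) ∧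
      (act (h6 * τ6 ^ 2) '' Q1 c = Q1 c) ∧
      (act (h6 ^ 3 * τ6 ^ 3) '' Q1 c = act (h6 * τ6) '' Q1 c ∧
        pt w ∈ act (h6 ^ 3 * τ6 ^ 3) '' Q1 c ∧
        act (h6 ^ 3 * τ6 ^ 3) '' Q1 c ≠ Q1 c ∧
        act (h6 ^ 3 * τ6 ^ 3) '' Q1 c ≠ act (τ6 ^ 2) '' Q1 c ∧
        act (h6 ^ 3 * τ6 ^ 3) '' Q1 c ≠ act (h6 ^ 4 * τ6 ^ 2) '' Q1 c) := by
  have hw0 : w ≠ 0 := by rintro rfl; simp at hw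
  refine ⟨⟨?_, ?_, ?_⟩, ⟨?_, ?_, ?_, ?_⟩, ?_, ⟨?_, ?_, ?_, ?_, ?_⟩⟩
  · ext x
    rw [mem_t2, mem_h4]
    constructor <;> rintro ⟨h1, h2, h3⟩ <;>
      exact ⟨by linear_combination h1, by linear_combination h2, by grind⟩
  · rw [mem_t2]
    simp [pt]
    grind
  · refine ne_of_mem ![1, 0, w, 0, 0, w ^ 2] ?_ ?_
    · rw [mem_id]
      simp <;> grind
    · rw [mem_t2]
      simp <;> grind
  · ext x
    rw [mem_h4t2, mem_h3]
    constructor <;> rintro ⟨h1, h2, h3⟩ <;>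
      exact ⟨by linear_combination h1, by linear_combination h2, by grind⟩
  · rw [mem_h4t2]
    simp [pt]
    grind
  · refine ne_of_mem ![1, 0, w, 0, 0, w ^ 2] ?_ ?_
    · rw [mem_id]
      simp <;> grind
    · rw [mem_h4t2]
      simp <;> grind
  · refine ne_of_mem ![0, 1, w, 0, 0, w ^ 2] ?_ ?_
    · rw [mem_t2]
      simp <;> grind
    · rw [mem_h4t2]
      simp <;> grind
  · ext x
    rw [mem_ht2, mem_id]
    constructor <;> rintro ⟨h1, h2, h3⟩ <;>
      exact ⟨by linear_combination h1, by linear_combination h2, by grind⟩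
  · ext x
    rw [mem_h3t3, mem_ht]
    constructor <;> rintro ⟨h1, h2, h3⟩ <;>
      exact ⟨by linear_combination h1, by linear_combination h2, by grind⟩
  · rw [mem_h3t3]
    simp [pt]
    grind
  · refine ne_of_mem ![1, 0, w, 0, 0, w ^ 2] ?_ ?_
    · rw [mem_id]
      simp <;> grind
    · rw [mem_h3t3]
      simp <;> grind
  · refine ne_of_mem ![0, 1, w, 0, 0, w ^ 2] ?_ ?_
    · rw [mem_t2]
      simp <;> grind
    · rw [mem_h3t3]
      simp <;> grind
  · refine ne_of_mem ![0, 1, 0, w, 0, w ^ 2] ?_ ?_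
    · rw [mem_h4t2]
      simp <;> grind
    · rw [mem_h3t3]
      simp <;> grind

/-- Lemma on the images of the quadrics Q_i under elements of G:
(a) τ²(Q_i) = h⁴(Q_i) ∋ o and τ²(Q_i) ≠ Q_i;
(b) h⁴τ²(Q_i) = h³(Q_i) ∋ o and h⁴τ²(Q_i) ≠ Q_i, τ²(Q_i);
(c) hτ²(Q_i) = Q_i;
(d) h³τ³(Q_i) = hτ(Q_i) ∋ o and h³τ³(Q_i) ≠ Q_i, τ²(Q_i), h⁴τ²(Q_i). -/
theorem images_of_Q_under_G (w : ℂ) (hw : w ^ 2 + w + 1 = 0) :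
    ∀ Q ∈ ({Q1 w, Q2 w} : Set (Set (Fin 6 → ℂ))),
      (act (τ6 ^ 2) '' Q = act (h6 ^ 4) '' Q ∧
        pt w ∈ act (τ6 ^ 2) '' Q ∧
        act (τ6 ^ 2) '' Q ≠ Q) ∧
      (act (h6 ^ 4 * τ6 ^ 2) '' Q = act (h6 ^ 3) '' Q ∧
        pt w ∈ act (h6 ^ 4 * τ6 ^ 2) '' Q ∧
        act (h6 ^ 4 * τ6 ^ 2) '' Q ≠ Q ∧
        act (h6 ^ 4 * τ6 ^ 2) '' Q ≠ act (τ6 ^ 2) '' Q) ∧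
      (act (h6 * τ6 ^ 2) '' Q = Q) ∧
      (act (h6 ^ 3 * τ6 ^ 3) '' Q = act (h6 * τ6) '' Q ∧
        pt w ∈ act (h6 ^ 3 * τ6 ^ 3) '' Q ∧
        act (h6 ^ 3 * τ6 ^ 3) '' Q ≠ Q ∧
        act (h6 ^ 3 * τ6 ^ 3) '' Q ≠ act (τ6 ^ 2) '' Q ∧
        act (h6 ^ 3 * τ6 ^ 3) '' Q ≠ act (h6 ^ 4 * τ6 ^ 2) '' Q) := by
  rintro Q (rfl | rfl)
  · exact images_aux w w hw
  · rw [Q2_eq]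
    exact images_aux w _ hw
end

section
/- The cyclic subgroup generated by h is a normal subgroup of G of order 5, and every nontrivial normal subgroup of G contains h; in particular ⟨h⟩ is the unique minimal normal subgroup of G. -/
/-- The subgroup G = ⟨τ, h⟩ of S₆. -/
def G6 : Subgroup (Equiv.Perm (Fin 6)) := Subgroup.closure {τ6, h6}

lemma h6_mem_G6 : h6 ∈ G6 := Subgroup.subset_closure (by simp)

/-- h as an element of the group G. -/
def h6G : G6 := ⟨h6, h6_mem_G6⟩

/-- Normal form of the elements of G. -/
def w6 (a : Fin 5) (b : Fin 4) : Equiv.Perm (Fin 6) := h6 ^ (a : ℕ) * τ6 ^ (b : ℕ)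

set_option maxRecDepth 100000 in
lemma w6_mul_τ : ∀ a b, ∃ c d, w6 a b * τ6 = w6 c d := by decide

set_option maxRecDepth 100000 in
lemma w6_mul_h : ∀ a b, ∃ c d, w6 a b * h6 = w6 c d := by decide

set_option maxRecDepth 100000 in
lemma w6_key : ∀ a b, w6 a b = 1 ∨ (∃ k : Fin 5, w6 a b ^ (k : ℕ) = h6) ∨
    ∃ k : Fin 5, (w6 a b * (h6 * (w6 a b)⁻¹ * h6⁻¹)) ^ (k : ℕ) = h6 := by decide

set_option maxRecDepth 100000 in
lemma w6_conj : ∀ a b, ∃ k : Fin 5, w6 a b * h6 * (w6 a b)⁻¹ = h6 ^ (k : ℕ) := by decide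

lemma τ6_pow : τ6 ^ 4 = 1 := by decide

set_option maxRecDepth 100000 in
lemma h6_pow : h6 ^ 5 = 1 := by decide

lemma h6_ne : h6 ≠ 1 := by decide

lemma G6_form (g : Equiv.Perm (Fin 6)) (hg : g ∈ G6) : ∃ a b, g = w6 a b := by
  have hτ : τ6⁻¹ = τ6 * τ6 * τ6 := by
    rw [inv_eq_iff_mul_eq_one, ← τ6_pow]; simp only [pow_succ, pow_zero, one_mul, mul_assoc]
  have hh : h6⁻¹ = h6 * h6 * h6 * h6 := by
    rw [inv_eq_iff_mul_eq_one, ← h6_pow]; simp only [pow_succ, pow_zero, one_mul, mul_assoc]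
  have st : ∀ x, (∃ a b, x = w6 a b) → ∃ a b, x * τ6 = w6 a b := by
    rintro _ ⟨a, b, rfl⟩; exact w6_mul_τ a b
  have sh : ∀ x, (∃ a b, x = w6 a b) → ∃ a b, x * h6 = w6 a b := by
    rintro _ ⟨a, b, rfl⟩; exact w6_mul_h a b
  unfold G6 at hg
  induction hg using Subgroup.closure_induction_right with
  | one => exact ⟨0, 0, by simp [w6]⟩
  | mul_right x hx y hy ih =>
    rcases hy with rfl | rfl
    · exact st _ ih
    · exact sh _ ih
  | mul_inv_cancel x hx y hy ih =>
    rcases hy with rfl | rfl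
    · rw [hτ, ← mul_assoc, ← mul_assoc]
      exact st _ (st _ (st _ ih))
    · rw [hh, ← mul_assoc, ← mul_assoc, ← mul_assoc]
      exact sh _ (sh _ (sh _ (sh _ ih)))

/-- The cyclic subgroup ⟨h⟩ is a normal subgroup of G of order 5, and every
nontrivial normal subgroup of G contains h; in particular ⟨h⟩ is the unique
minimal normal subgroup of G. -/
theorem zpowers_h_unique_minimal_normal :
    (Subgroup.zpowers h6G).Normal ∧
    Nat.card (Subgroup.zpowers h6G) = 5 ∧
    ∀ N : Subgroup G6, N.Normal → N ≠ ⊥ → h6G ∈ N := by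
  refine ⟨⟨?_⟩, ?_, ?_⟩
  · rintro _ ⟨n, rfl⟩ ⟨g, hg⟩
    obtain ⟨a, b, rfl⟩ := G6_form g hg
    obtain ⟨k, hk⟩ := w6_conj a b
    have : (⟨w6 a b, hg⟩ : G6) * h6G * (⟨w6 a b, hg⟩ : G6)⁻¹ = h6G ^ (k : ℕ) :=
      Subtype.ext hk
    change _ * h6G ^ n * _ ∈ _
    rw [← conj_zpow, this]
    exact Subgroup.zpow_mem _ (Subgroup.pow_mem _ (Subgroup.mem_zpowers _) _) _
  · rw [Nat.card_zpowers]
    have : Fact (Nat.Prime 5) := ⟨by norm_num⟩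
    exact orderOf_eq_prime (Subtype.ext h6_pow) (fun h => h6_ne (congrArg Subtype.val h))
  · intro N hN hne
    obtain ⟨⟨g, hg⟩, hgN, hg1⟩ := (Subgroup.ne_bot_iff_exists_ne_one.1 hne).elim
      (fun x hx => (⟨x.1, x.2, fun h => hx (Subtype.ext h)⟩ : ∃ x : G6, x ∈ N ∧ x ≠ 1))
    obtain ⟨a, b, rfl⟩ := G6_form g hg
    rcases w6_key a b with h | ⟨k, hk⟩ | ⟨k, hk⟩
    · exact absurd (Subtype.ext h) hg1
    · have e : (⟨w6 a b, hg⟩ : G6) ^ (k : ℕ) = h6G := Subtype.ext hk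
      rw [← e]
      exact N.pow_mem hgN _
    · have e : ((⟨w6 a b, hg⟩ : G6) * (h6G * (⟨w6 a b, hg⟩ : G6)⁻¹ * h6G⁻¹)) ^ (k : ℕ) = h6G :=
        Subtype.ext hk
      have m := N.pow_mem (N.mul_mem hgN (hN.conj_mem _ (N.inv_mem hgN) h6G)) (k : ℕ)
      rwa [e] at m
end

section
/- There is no injective group homomorphism from G into GL(3, ℂ) (the group of invertible 3×3 complex matrices); i.e., G is not isomorphic to any subgroup of GL(3, ℂ). -/
open Polynomial in
/-- A 3×3 complex matrix of order dividing 5 that is conjugate to its square is trivial. -/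
theorem aux_matrix (H T S : Matrix (Fin 3) (Fin 3) ℂ) (hTS : T * S = 1)
    (hc : T * H * S = H ^ 2) (h5 : H ^ 5 = 1) : H = 1 := by
  by_contra hne
  have hsq : ∀ z : ℂ, H.charpoly.eval z = 0 → H.charpoly.eval (z ^ 2) = 0 := by
    intro z hz
    rw [Matrix.eval_charpoly] at hz ⊢
    have hdet : T.det * S.det = 1 := by rw [← Matrix.det_mul, hTS, Matrix.det_one]
    have hcomm : T * Matrix.scalar (Fin 3) (z ^ 2) = Matrix.scalar (Fin 3) (z ^ 2) * T :=
      ((Matrix.scalar_commute (z ^ 2) (fun r => mul_comm _ _) T).eq).symm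
    have hcz : H * Matrix.scalar (Fin 3) z = Matrix.scalar (Fin 3) z * H :=
      ((Matrix.scalar_commute z (fun r => mul_comm _ _) H).eq).symm
    have e1 : T * (Matrix.scalar (Fin 3) (z ^ 2) - H) * S
        = (Matrix.scalar (Fin 3) z - H) * (Matrix.scalar (Fin 3) z + H) := by
      rw [mul_sub, sub_mul, hc, hcomm, mul_assoc, hTS, mul_one, map_pow, sub_mul, mul_add, mul_add,
        hcz]
      noncomm_ring
    have e2 := congrArg Matrix.det e1
    rw [Matrix.det_mul, Matrix.det_mul, Matrix.det_mul, hz, zero_mul] at e2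
    linear_combination e2 - (Matrix.scalar (Fin 3) (z ^ 2) - H).det * hdet
  -- an eigenvalue that is a primitive fifth root of unity
  obtain ⟨z, hz, hz0⟩ : ∃ z : ℂ, H.charpoly.eval z = 0 ∧ z ^ 4 + z ^ 3 + z ^ 2 + z + 1 = 0 := by
    have hmap := spectrum.map_polynomial_aeval_of_nonempty H
      (X ^ 4 + X ^ 3 + X ^ 2 + X + 1 : ℂ[X])
      (spectrum.nonempty_of_isAlgClosed_of_finiteDimensional ℂ H)
    have h0 : (0 : ℂ) ∈ spectrum ℂ (aeval H (X ^ 4 + X ^ 3 + X ^ 2 + X + 1 : ℂ[X])) := by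
      rw [spectrum.zero_mem_iff]
      intro hu
      apply hne
      have : aeval H (X ^ 4 + X ^ 3 + X ^ 2 + X + 1 : ℂ[X]) * (H - 1) = 0 := by
        simp only [map_add, map_pow, aeval_X, map_one]
        have : (H ^ 4 + H ^ 3 + H ^ 2 + H + 1) * (H - 1) = H ^ 5 - 1 := by noncomm_ring
        rw [this, h5, sub_self]
      exact sub_eq_zero.mp ((hu.mul_right_eq_zero).mp this)
    rw [hmap] at h0
    obtain ⟨z, hz, hz0⟩ := h0
    refine ⟨z, Matrix.mem_spectrum_iff_isRoot_charpoly.mp hz, ?_⟩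
    simpa using hz0
  have hz5 : z ^ 5 = 1 := by linear_combination (z - 1) * hz0
  have hz1 : z ≠ 1 := by
    rintro rfl
    norm_num at hz0
  have : Fact (Nat.Prime 5) := ⟨by norm_num⟩
  have hprim : IsPrimitiveRoot z 5 := by
    have := IsPrimitiveRoot.orderOf z
    rwa [orderOf_eq_prime hz5 hz1] at this
  have r2 := hsq z hz
  have r4 := hsq _ r2
  have r3 := hsq _ r4
  have e3 : ((z ^ 2) ^ 2) ^ 2 = z ^ 3 := by linear_combination z ^ 3 * hz5
  have e4 : (z ^ 2) ^ 2 = z ^ 4 := by ring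
  rw [e3] at r3
  rw [e4] at r4
  have hp : H.charpoly = 0 := by
    apply Polynomial.eq_zero_of_natDegree_lt_card_of_eval_eq_zero H.charpoly
      (f := fun i : Fin 4 => z ^ (i.val + 1))
    · intro i j hij
      have := hprim.pow_inj (by omega) (by omega) hij
      exact Fin.ext (by omega)
    · intro i
      fin_cases i
      · simpa using hz
      · simpa using r2
      · simpa using r3
      · simpa using r4
    · rw [Matrix.charpoly_natDegree_eq_dim]
      simp
  exact (Matrix.charpoly_monic H).ne_zero hp

/-- G does not embed into GL(3, ℂ). -/
theorem G_not_subgroup_of_GL3 :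
    ∀ φ : G6 →* GL (Fin 3) ℂ, ¬ Function.Injective φ := by
  intro φ hφ
  let t : ↥G6 := ⟨τ6, Subgroup.subset_closure (by simp)⟩
  let h : G6 := ⟨h6, Subgroup.subset_closure (by simp)⟩
  have hc : t * h * t⁻¹ = h ^ 2 := Subtype.ext (by
    change τ6 * h6 * τ6⁻¹ = h6 ^ 2
    decide)
  have h5 : h ^ 5 = 1 := Subtype.ext (by
    change h6 ^ 5 = 1
    decide)
  have hne : h ≠ 1 := by
    intro e
    have : h6 = 1 := congrArg Subtype.val e
    revert this
    decide
  apply hne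
  apply hφ
  rw [map_one]
  apply Units.ext
  refine aux_matrix _ (φ t : Matrix (Fin 3) (Fin 3) ℂ) ((φ t)⁻¹ : GL (Fin 3) ℂ) ?_ ?_ ?_
  · exact Units.mul_inv _
  · have := congrArg (fun g => ((φ g : GL (Fin 3) ℂ) : Matrix (Fin 3) (Fin 3) ℂ)) hc
    simpa only [map_mul, map_inv, map_pow, Units.val_mul, Units.val_pow_eq_pow_val] using this
  · have := congrArg (fun g => ((φ g : GL (Fin 3) ℂ) : Matrix (Fin 3) (Fin 3) ℂ)) h5
    simpa only [map_one, map_pow, Units.val_one, Units.val_pow_eq_pow_val] using this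
end

section
/- There is no injective group homomorphism from G into PGL(2, ℂ), i.e. into the quotient of GL(2, ℂ) by its center. -/
/-- PGL(2, ℂ), the quotient of GL(2, ℂ) by its center. -/
abbrev PGL2C := GL (Fin 2) ℂ ⧸ Subgroup.center (GL (Fin 2) ℂ)

lemma center_scalar (Z : GL (Fin 2) ℂ) (hZ : Z ∈ Subgroup.center (GL (Fin 2) ℂ)) :
    ∃ z : ℂ, (Z : Matrix (Fin 2) (Fin 2) ℂ) = z • 1 := by
  rw [Matrix.GeneralLinearGroup.mem_center_iff_val_mem_range_scalar] at hZ
  obtain ⟨z, hz⟩ := hZ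
  exact ⟨z, by rw [← hz]; ext i j; simp [Matrix.scalar_apply, Matrix.diagonal_apply, Matrix.one_apply]⟩

lemma scalar_center (Z : GL (Fin 2) ℂ) (z : ℂ)
    (hz : (Z : Matrix (Fin 2) (Fin 2) ℂ) = z • 1) : Z ∈ Subgroup.center (GL (Fin 2) ℂ) := by
  rw [Subgroup.mem_center_iff]
  intro g
  ext1
  simp [hz]

lemma key (A T : GL (Fin 2) ℂ) (z w : ℂ)
    (h1 : (T * A : Matrix (Fin 2) (Fin 2) ℂ) * (z • 1) = A * A * T)
    (h2 : (A : Matrix (Fin 2) (Fin 2) ℂ) ^ 5 = w • 1) :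
    ∃ a : ℂ, (A : Matrix (Fin 2) (Fin 2) ℂ) = a • 1 := by
  have hT : (T : Matrix (Fin 2) (Fin 2) ℂ).det ≠ 0 := T.det.ne_zero
  have hd : (A : Matrix (Fin 2) (Fin 2) ℂ).det ≠ 0 := A.det.ne_zero
  have e1 : z ^ 2 = (A : Matrix (Fin 2) (Fin 2) ℂ).det := by
    have := congrArg Matrix.det h1
    simp only [Matrix.det_mul, Matrix.det_smul, Matrix.det_one, Fintype.card_fin] at this
    apply mul_left_cancel₀ (mul_ne_zero hT hd)
    linear_combination this
  have e2 : z * (A : Matrix (Fin 2) (Fin 2) ℂ).trace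
      = ((A : Matrix (Fin 2) (Fin 2) ℂ) * A).trace := by
    have h3 : z • (A : Matrix (Fin 2) (Fin 2) ℂ) = (T⁻¹ : GL (Fin 2) ℂ).val * (A * A * T) := by
      rw [← h1, mul_assoc T.val, ← mul_assoc _ T.val, Units.inv_mul]
      simp
    have := congrArg Matrix.trace h3
    rw [Matrix.trace_mul_comm, mul_assoc, Units.mul_inv] at this
    simpa using this
  generalize (A : Matrix (Fin 2) (Fin 2) ℂ) = M at *
  obtain ⟨a, b, c, d, rfl⟩ : ∃ a b c d, M = !![a, b; c, d] := ⟨_, _, _, _, Matrix.eta_fin_two M⟩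
  simp only [Matrix.det_fin_two_of] at hd e1
  simp [Matrix.trace_fin_two] at e2
  have ch : (!![a, b; c, d] : Matrix (Fin 2) (Fin 2) ℂ) ^ 5 = ((a+d)^4 - 3*(a+d)^2*(a*d-b*c) + (a*d-b*c)^2) • !![a, b; c, d]
     + (-(a*d-b*c)*((a+d)^3-2*(a+d)*(a*d-b*c))) • 1 := by
    ext i j
    fin_cases i <;> fin_cases j <;> simp [pow_succ] <;> ring
  rw [ch] at h2
  set t := a + d with ht
  set D := a * d - b * c with hD
  have e3 : z * t = t ^ 2 - 2 * D := by rw [e2, ht, hD]; ring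
  have hp : t^4 - 3*t^2*D + D^2 ≠ 0 := by
    intro hp
    have e4 : t^4 - 5*t^2*D + 4*D^2 = 0 := by
      linear_combination -(z*t + t^2 - 2*D) * e3 + t^2 * e1
    have e5 : D * (2 * t^2 - 3 * D) = 0 := by linear_combination hp - e4
    have e6 : 2 * t^2 - 3 * D = 0 := (mul_eq_zero.mp e5).resolve_left hd
    have e7 : D ^ 2 = 0 := by
      linear_combination (-4/5) * hp + (4/5) * (t^2/2 - 3/4 * D) * e6
    exact hd (pow_eq_zero_iff (two_ne_zero) |>.mp e7)
  generalize t^4 - 3*t^2*D + D^2 = p at *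
  generalize -D*(t^3-2*t*D) = q at *
  have k00 := congrFun (congrFun h2 0) 0
  have k01 := congrFun (congrFun h2 0) 1
  have k10 := congrFun (congrFun h2 1) 0
  have k11 := congrFun (congrFun h2 1) 1
  simp [hp] at k00 k01 k10 k11
  have : a = d := mul_left_cancel₀ hp (by linear_combination k00 - k11)
  refine ⟨a, ?_⟩
  subst k01 k10
  ext i j
  fin_cases i <;> fin_cases j <;> simp [this]

/-- G does not embed into PGL(2, ℂ). -/
theorem G_not_subgroup_of_PGL2 :
    ∀ φ : G6 →* PGL2C, ¬ Function.Injective φ := by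
  intro φ hφ
  let τ : G6 := ⟨τ6, Subgroup.subset_closure (by simp)⟩
  let h : G6 := ⟨h6, Subgroup.subset_closure (by simp)⟩
  have r1 : τ * h = h * h * τ := by
    apply Subtype.ext
    change τ6 * h6 = h6 * h6 * τ6
    decide
  have r2 : h ^ 5 = 1 := by
    apply Subtype.ext
    change h6 ^ 5 = 1
    decide
  have r3 : h ≠ 1 := by
    intro hh
    have : h6 = 1 := congrArg Subtype.val hh
    revert this
    decide
  obtain ⟨T, hT⟩ := QuotientGroup.mk_surjective (φ τ)
  obtain ⟨A, hA⟩ := QuotientGroup.mk_surjective (φ h)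
  have s1 : ((T * A : GL (Fin 2) ℂ) : PGL2C) = (A * A * T : GL (Fin 2) ℂ) := by
    have := congrArg φ r1
    simp only [map_mul, ← hT, ← hA] at this
    exact this
  have s2 : ((A ^ 5 : GL (Fin 2) ℂ) : PGL2C) = 1 := by
    have := congrArg φ r2
    simp only [map_pow, map_one, ← hA] at this
    exact this
  rw [QuotientGroup.eq] at s1
  rw [QuotientGroup.eq_one_iff] at s2
  obtain ⟨z, hz⟩ := center_scalar _ s1
  obtain ⟨w, hw⟩ := center_scalar _ s2
  obtain ⟨a, ha⟩ := key A T z w (by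
    rw [← hz, ← Units.val_mul, ← Units.val_mul, mul_inv_cancel_left]; rfl) (by
    rw [← hw]; rfl)
  apply r3
  apply hφ
  rw [map_one, ← hA]
  exact (QuotientGroup.eq_one_iff _).mpr (scalar_center A a ha)
end
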